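/- arXiv:1612.07197 — 5 statements merged into one kernel-verified Lean document; each statement's English description precedes it below -/
import Mathlib

section
/- Let α > 1 and β > 1/2 be real numbers with β − 1/2 < α < β + 1/2. Then there exists a constant C > 0, depending only on α and β, such that for every real T ≥ 1, setting ζ_T = T^{−α/(α+2β)}, one has ∑_{j=1}^{∞} ζ_T² · j^{−2β} / (j^{−α} + ζ_T)² ≤ C · T^{−(2β−1)/(α+2β)}. -/
/-- Comparison of a partial sum of `k ^ (s - 1)`, `0 < s ≤ 1`, with its integral. -/
theorem sum_range_rpow_sub_one_le {s : ℝ} (hs : 0 < s) (hs1 : s ≤ 1) (N : ℕ) :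
    ∑ k ∈ Finset.range N, ((k : ℝ) + 1) ^ (s - 1) ≤ (N : ℝ) ^ s / s := by
  induction N with
  | zero => simp [hs.ne']
  | succ k ih =>
    rw [Finset.sum_range_succ]
    have hx : (0 : ℝ) < (k : ℝ) + 1 := by positivity
    have hinv : 1 / ((k : ℝ) + 1) ≤ 1 := by
      rw [div_le_one hx]
      linarith [k.cast_nonneg (α := ℝ)]
    have hbern := rpow_one_add_le_one_add_mul_self (s := -(1 / ((k : ℝ) + 1)))
      (by linarith) hs.le hs1
    have hk : (k : ℝ) = (k + 1) * (1 + -(1 / ((k : ℝ) + 1))) := by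
      field_simp
      ring
    have hks : (k : ℝ) ^ s ≤ ((k : ℝ) + 1) ^ s - s * ((k : ℝ) + 1) ^ (s - 1) := by
      calc (k : ℝ) ^ s = ((k : ℝ) + 1) ^ s * (1 + -(1 / ((k : ℝ) + 1))) ^ s := by
            rw [← Real.mul_rpow hx.le (by linarith), ← hk]
        _ ≤ ((k : ℝ) + 1) ^ s * (1 + s * -(1 / ((k : ℝ) + 1))) := by gcongr
        _ = _ := by
            rw [Real.rpow_sub_one hx.ne']
            ring
    rw [le_div_iff₀ hs] at ih ⊢
    push_cast
    linarith

/-- Comparison of a finite piece of the tail of `∑ k ^ (-(1 + t))` with its integral. -/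
theorem sum_range_add_rpow_neg_le {t : ℝ} (ht : 0 < t) {N : ℕ} (hN : 0 < N) (M : ℕ) :
    ∑ i ∈ Finset.range M, ((N + i : ℕ) + 1 : ℝ) ^ (-(1 + t)) ≤ (N : ℝ) ^ (-t) / t := by
  suffices h : ∑ i ∈ Finset.range M, ((N + i : ℕ) + 1 : ℝ) ^ (-(1 + t)) ≤
      ((N : ℝ) ^ (-t) - ((N + M : ℕ) : ℝ) ^ (-t)) / t by
    refine h.trans ?_
    gcongr
    exact sub_le_self _ (by positivity)
  induction M with
  | zero => simp
  | succ i ih =>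
    rw [Finset.sum_range_succ, ← add_assoc N i 1, Nat.cast_succ (N + i)]
    have hy : (0 : ℝ) < ((N + i : ℕ) : ℝ) := by exact_mod_cast (by omega)
    generalize ((N + i : ℕ) : ℝ) = y at *
    have hx : 0 < y + 1 := by linarith
    have hq : 0 < y / (y + 1) := by positivity
    have hbern : 1 + t * (1 / (y + 1)) ≤ (y / (y + 1)) ^ (-t) := by
      rw [Real.rpow_def_of_pos hq]
      have hexp := Real.add_one_le_exp (Real.log (y / (y + 1)) * -t)
      have hlog := Real.log_le_sub_one_of_pos hq
      have heq : y / (y + 1) - 1 = -(1 / (y + 1)) := by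
        field_simp
        ring
      rw [heq] at hlog
      nlinarith
    have hyt : (y + 1) ^ (-t) + t * (y + 1) ^ (-(1 + t)) ≤ y ^ (-t) := by
      calc (y + 1) ^ (-t) + t * (y + 1) ^ (-(1 + t))
          = (y + 1) ^ (-t) * (1 + t * (1 / (y + 1))) := by
            rw [show -(1 + t) = -t - 1 by ring, Real.rpow_sub_one hx.ne']
            ring
        _ ≤ (y + 1) ^ (-t) * (y / (y + 1)) ^ (-t) := by gcongr
        _ = y ^ (-t) := by
            rw [← Real.mul_rpow hx.le hq.le, mul_div_cancel₀ _ hx.ne']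
    rw [le_div_iff₀ ht] at ih ⊢
    linarith

/-- Bound for a Tikhonov bias term below the cut-off `R`, where `ζ = R ^ (-α)`. -/
theorem tikhonov_term_le_of_le {α β s R x : ℝ} (hs : s ≤ 2 * α - 2 * β + 1) (hx : 0 < x)
    (hxR : x ≤ R) :
    (R ^ (-α)) ^ 2 * x ^ (-(2 * β)) / (x ^ (-α) + R ^ (-α)) ^ 2 ≤
      R ^ (-(2 * β) + 1 - s) * x ^ (s - 1) := by
  have hR : 0 < R := hx.trans_le hxR
  calc (R ^ (-α)) ^ 2 * x ^ (-(2 * β)) / (x ^ (-α) + R ^ (-α)) ^ 2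
      ≤ (R ^ (-α)) ^ 2 * x ^ (-(2 * β)) / (x ^ (-α)) ^ 2 := by
        gcongr
        exact le_add_of_nonneg_right (by positivity)
    _ = R ^ (-(2 * α)) * x ^ (2 * α - 2 * β + 1 - s) * x ^ (s - 1) := by
        rw [← Real.rpow_natCast, ← Real.rpow_natCast, ← Real.rpow_mul hR.le,
          ← Real.rpow_mul hx.le, mul_div_assoc, ← Real.rpow_sub hx, mul_assoc,
          ← Real.rpow_add hx]
        congr 2 <;> push_cast <;> ring
    _ ≤ R ^ (-(2 * α)) * R ^ (2 * α - 2 * β + 1 - s) * x ^ (s - 1) := by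
        gcongr
    _ = _ := by
        rw [← Real.rpow_add hR]
        congr 2
        ring

/-- Bound for a Tikhonov bias term that ignores the regularisation gain. -/
theorem tikhonov_term_le {α β z x : ℝ} (hz : 0 < z) (hx : 0 < x) :
    z ^ 2 * x ^ (-(2 * β)) / (x ^ (-α) + z) ^ 2 ≤ x ^ (-(2 * β)) := by
  rw [div_le_iff₀ (by positivity), mul_comm]
  gcongr
  exact le_add_of_nonneg_left (by positivity)

/-- Partial sums of the Tikhonov bias, in terms of the cut-off `R` with `ζ = R ^ (-α)`. -/
theorem sum_range_tikhonov_le {α β s R : ℝ} (hβ : 1 / 2 < β) (hs : 0 < s) (hs1 : s ≤ 1)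
    (hsα : s ≤ 2 * α - 2 * β + 1) (hR : 1 ≤ R) (M : ℕ) :
    ∑ k ∈ Finset.range M, (R ^ (-α)) ^ 2 * ((k : ℝ) + 1) ^ (-(2 * β)) /
        (((k : ℝ) + 1) ^ (-α) + R ^ (-α)) ^ 2 ≤
      (1 / s + 2 ^ (2 * β - 1) / (2 * β - 1)) * R ^ (-(2 * β - 1)) := by
  have hR0 : 0 < R := by linarith
  have ht : 0 < 2 * β - 1 := by linarith
  have hN : 0 < ⌊R⌋₊ := Nat.floor_pos.2 hR
  have hNR : (⌊R⌋₊ : ℝ) ≤ R := Nat.floor_le hR0.le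
  have hN1 : (1 : ℝ) ≤ ⌊R⌋₊ := by exact_mod_cast hN
  have hRN : R / 2 ≤ ⌊R⌋₊ := by linarith [Nat.lt_floor_add_one R]
  set N := ⌊R⌋₊
  refine (Finset.sum_le_sum_of_subset_of_nonneg
    (Finset.range_mono (Nat.le_add_left M N)) fun _ _ _ => by positivity).trans ?_
  rw [Finset.sum_range_add, add_mul]
  refine add_le_add ?_ ?_
  · calc _ ≤ ∑ k ∈ Finset.range N, R ^ (-(2 * β) + 1 - s) * ((k : ℝ) + 1) ^ (s - 1) := by
          refine Finset.sum_le_sum fun k hk => tikhonov_term_le_of_le hsα (by positivity) ?_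
          have hkN : ((k + 1 : ℕ) : ℝ) ≤ N := Nat.cast_le.2 (Finset.mem_range.1 hk)
          push_cast at hkN
          linarith
      _ ≤ R ^ (-(2 * β) + 1 - s) * (R ^ s / s) := by
          rw [← Finset.mul_sum]
          gcongr
          exact (sum_range_rpow_sub_one_le hs hs1 N).trans (by gcongr)
      _ = _ := by
          rw [← mul_div_assoc, ← Real.rpow_add hR0]
          ring_nf
  · calc _ ≤ ∑ i ∈ Finset.range M, ((N + i : ℕ) + 1 : ℝ) ^ (-(1 + (2 * β - 1))) := by
          refine Finset.sum_le_sum fun i _ => ?_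
          rw [add_sub_cancel]
          exact tikhonov_term_le (by positivity) (by positivity)
      _ ≤ (N : ℝ) ^ (-(2 * β - 1)) / (2 * β - 1) := sum_range_add_rpow_neg_le ht hN M
      _ ≤ (R / 2) ^ (-(2 * β - 1)) / (2 * β - 1) := by
          gcongr ?_ / _
          exact Real.rpow_le_rpow_of_nonpos (by positivity) hRN (by linarith)
      _ = _ := by
          rw [Real.div_rpow hR0.le zero_le_two, Real.rpow_neg zero_le_two, div_inv_eq_mul]
          ring

/-- **Sequence lemma, part (A).**  For `α > 1`, `β > 1/2` with `β - 1/2 < α < β + 1/2`,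
there is a constant `C > 0` (depending only on `α, β`) such that for all `T ≥ 1`, with
`ζ_T = T ^ (-α/(α+2β))`,
`∑_{j≥1} ζ_T² j^{-2β} / (j^{-α} + ζ_T)² ≤ C · T^{-(2β-1)/(α+2β)}`. -/
theorem sequence_lemma_A (α β : ℝ) (hα : 1 < α) (hβ : 1 / 2 < β)
    (h1 : β - 1 / 2 < α) (h2 : α < β + 1 / 2) :
    ∃ C > (0 : ℝ), ∀ T : ℝ, 1 ≤ T →
      (∑' j : ℕ+, (T ^ (-α / (α + 2 * β))) ^ 2 * (j : ℝ) ^ (-(2 * β)) /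
          ((j : ℝ) ^ (-α) + T ^ (-α / (α + 2 * β))) ^ 2)
        ≤ C * T ^ (-(2 * β - 1) / (α + 2 * β)) := by
  have hs : 0 < min (2 * α - 2 * β + 1) 1 := lt_min (by linarith) one_pos
  have ht : 0 < 2 * β - 1 := by linarith
  refine ⟨1 / min (2 * α - 2 * β + 1) 1 + 2 ^ (2 * β - 1) / (2 * β - 1), by positivity,
    fun T hT => ?_⟩
  have hT0 : 0 ≤ T := by linarith
  have hpow (a : ℝ) : T ^ (a / (α + 2 * β)) = (T ^ (1 / (α + 2 * β))) ^ a := by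
    rw [← Real.rpow_mul hT0, one_div_mul_eq_div]
  have hR : 1 ≤ T ^ (1 / (α + 2 * β)) :=
    Real.one_le_rpow hT (one_div_nonneg.2 (by linarith))
  rw [hpow (-α), hpow (-(2 * β - 1))]
  generalize T ^ (1 / (α + 2 * β)) = R at hR
  rw [tsum_pnat_eq_tsum_succ (f := fun j : ℕ => (R ^ (-α)) ^ 2 * (j : ℝ) ^ (-(2 * β)) /
    ((j : ℝ) ^ (-α) + R ^ (-α)) ^ 2)]
  refine Real.tsum_le_of_sum_range_le (fun k => by positivity) fun M => ?_
  simpa only [Nat.cast_succ] using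
    sum_range_tikhonov_le hβ hs (min_le_right _ _) (min_le_left _ _) hR M
end

section
/- Let α > 1 and β > 1/2 be real numbers. Then there exists a constant C > 0, depending only on α and β, such that for every real T ≥ 1, setting ζ_T = T^{−α/(α+2β)}, one has ∑_{j=1}^{∞} (1/T) · j^{−α} / (j^{−α} + ζ_T)² ≤ C · T^{−(2β−1)/(α+2β)}. -/
/-- A summand of the `p`-series is bounded by a telescoping difference. -/
theorem Real.add_one_rpow_neg_le_sub {α x : ℝ} (hα : 1 < α) (hx : 0 < x) :
    (x + 1) ^ (-α) ≤ (x ^ (1 - α) - (x + 1) ^ (1 - α)) / (α - 1) := by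
  have hx1 : 0 < x + 1 := by linarith
  have hratio : 1 + (α - 1) * (1 / (x + 1)) ≤ (x / (x + 1)) ^ (1 - α) := by
    have hlog := Real.log_le_sub_one_of_pos (div_pos hx hx1)
    have hsub : x / (x + 1) - 1 = -(1 / (x + 1)) := by field_simp; ring
    rw [Real.rpow_def_of_pos (div_pos hx hx1)]
    nlinarith [Real.add_one_le_exp (Real.log (x / (x + 1)) * (1 - α))]
  have hpow : (x + 1) ^ (-α) = (x + 1) ^ (1 - α) * (1 / (x + 1)) := by
    rw [show -α = 1 - α - 1 by ring, Real.rpow_sub_one hx1.ne']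
    ring
  rw [Real.div_rpow hx.le hx1.le, le_div_iff₀ (by positivity)] at hratio
  rw [le_div_iff₀ (by linarith), hpow]
  linarith

/-- A sequence bounded by `A` and by `A * (n / N) ^ (-α)` has partial sums of order `A * N`. -/
theorem Finset.sum_range_le_of_le_rpow_neg {α N A : ℝ} (hα : 1 < α) (hN : 1 ≤ N) (hA : 0 ≤ A)
    {f : ℕ → ℝ} (hf : ∀ n, f n ≤ A) (hf' : ∀ n : ℕ, f n ≤ A * N ^ α * ((n : ℝ) + 1) ^ (-α))
    (n : ℕ) : ∑ i ∈ Finset.range n, f i ≤ (2 + 1 / (α - 1)) * (A * N) := by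
  have hN0 : 0 < N := by linarith
  have hα1 : 0 < α - 1 := by linarith
  set M := ⌊N⌋₊ + 1 with hM
  have hMN : N ≤ M := by
    rw [hM]; push_cast; exact (Nat.lt_floor_add_one N).le
  have hM2 : (M : ℝ) ≤ 2 * N := by
    rw [hM]; push_cast; linarith [Nat.floor_le hN0.le]
  have hhead (m : ℕ) : ∑ i ∈ Finset.range m, f i ≤ m * A := by
    simpa using Finset.sum_le_sum fun i (_ : i ∈ Finset.range m) ↦ hf i
  rcases le_total n M with h | h
  · have hn : (n : ℝ) ≤ 2 * N := le_trans (by exact_mod_cast h) hM2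
    have : 0 ≤ 1 / (α - 1) * (A * N) := by positivity
    nlinarith [hhead n, mul_le_mul_of_nonneg_right hn hA]
  · have htail : ∑ i ∈ Finset.range n, f i ≤
        M * A + A * N ^ α * (((M : ℝ) ^ (1 - α) - (n : ℝ) ^ (1 - α)) / (α - 1)) := by
      induction n, h using Nat.le_induction with
      | base => simpa using hhead M
      | succ n hn ih =>
        have hn0 : (0 : ℝ) < n := by exact_mod_cast (by omega : 0 < n)
        have hstep := (hf' n).trans
          (mul_le_mul_of_nonneg_left (Real.add_one_rpow_neg_le_sub hα hn0) (by positivity))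
        rw [Finset.sum_range_succ]
        push_cast
        refine (add_le_add ih hstep).trans_eq ?_
        ring
    have hMpow : (M : ℝ) ^ (1 - α) ≤ N ^ (1 - α) :=
      Real.rpow_le_rpow_of_nonpos hN0 hMN (by linarith)
    have hprod : N ^ α * N ^ (1 - α) = N := by
      rw [← Real.rpow_add hN0]; simp
    calc _ ≤ _ := htail
      _ ≤ 2 * N * A + A * N ^ α * (N ^ (1 - α) / (α - 1)) := by
        gcongr
        linarith [Real.rpow_nonneg (Nat.cast_nonneg (α := ℝ) n) (1 - α)]
      _ = 2 * N * A + A * (N ^ α * N ^ (1 - α)) / (α - 1) := by ring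
      _ = (2 + 1 / (α - 1)) * (A * N) := by rw [hprod]; ring

/-- **Sequence lemma, part (B).**  For `α > 1`, `β > 1/2`, there is a constant `C > 0`
(depending only on `α, β`) such that for all `T ≥ 1`, with `ζ_T = T ^ (-α/(α+2β))`,
`∑_{j≥1} (1/T) · j^{-α} / (j^{-α} + ζ_T)² ≤ C · T^{-(2β-1)/(α+2β)}`. -/
theorem sequence_lemma_B (α β : ℝ) (hα : 1 < α) (hβ : 1 / 2 < β) :
    ∃ C > (0 : ℝ), ∀ T : ℝ, 1 ≤ T →
      (∑' j : ℕ+, (1 / T) * (j : ℝ) ^ (-α) /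
          ((j : ℝ) ^ (-α) + T ^ (-α / (α + 2 * β))) ^ 2)
        ≤ C * T ^ (-(2 * β - 1) / (α + 2 * β)) := by
  have hα1 : 0 < α - 1 := by linarith
  refine ⟨2 + 1 / (α - 1), by positivity, fun T hT ↦ ?_⟩
  have hT0 : 0 < T := by linarith
  have hγ : 0 < α + 2 * β := by linarith
  set N := T ^ (1 / (α + 2 * β)) with hNdef
  have hN : 1 ≤ N := Real.one_le_rpow hT (by positivity)
  have hN0 : 0 < N := by linarith
  have hζ : T ^ (-α / (α + 2 * β)) = (N ^ α)⁻¹ := by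
    rw [← Real.rpow_neg hN0.le, hNdef, ← Real.rpow_mul hT0.le]; congr 1; ring
  have hrate : T ^ (-(2 * β - 1) / (α + 2 * β)) = 1 / T * N ^ α * N := by
    rw [hNdef, ← Real.rpow_mul hT0.le, one_div T, ← Real.rpow_neg_one, ← Real.rpow_add hT0,
      ← Real.rpow_add hT0]
    congr 1; field_simp; ring
  rw [hζ, hrate, tsum_pnat_eq_tsum_succ
    (f := fun j : ℕ ↦ 1 / T * (j : ℝ) ^ (-α) / ((j : ℝ) ^ (-α) + (N ^ α)⁻¹) ^ 2)]
  have hB : 0 < N ^ α := by positivity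
  refine Real.tsum_le_of_sum_range_le (fun n ↦ by positivity) fun n ↦
    Finset.sum_range_le_of_le_rpow_neg hα hN (by positivity) (fun n ↦ ?_) (fun n ↦ ?_) n
  all_goals
    push_cast
    have hx : 0 < ((n : ℝ) + 1) ^ (-α) := by positivity
    set x := ((n : ℝ) + 1) ^ (-α)
    set z := (N ^ α)⁻¹ with hz
    have hz0 : 0 < z := by positivity
    have hzB : N ^ α = z⁻¹ := by simp [hz]
    rw [hzB, div_le_iff₀ (by positivity)]
  · rw [mul_assoc]
    gcongr
    rw [inv_mul_eq_div, le_div_iff₀ hz0]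
    nlinarith
  · rw [mul_assoc, mul_assoc, mul_assoc]
    gcongr
    rw [inv_mul_eq_div, le_div_iff₀ hz0, inv_mul_eq_div, le_div_iff₀ hz0, mul_assoc]
    gcongr
    nlinarith
end

section
/- Let α > 1 and β > 1/2 be real numbers. Then there exists a constant C > 0, depending only on α and β, such that for every real T ≥ 1, setting ζ_T = T^{−α/(α+2β)}, one has ∑_{j=1}^{∞} j^{−2α} / (j^{−α} + ζ_T)² ≤ C · T^{1/(α+2β)}. -/
/-- A ridge-type weight is dominated by a telescoping difference. -/
theorem rpow_div_sq_add_le_telescope {α N y : ℝ} (hα : 1 ≤ α) (hN : 0 < N) (hy : 1 ≤ y) :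
    y ^ (-(2 * α)) / (y ^ (-α) + N ^ (-α)) ^ 2
      ≤ 4 * N ^ 2 * ((N + (y - 1))⁻¹ - (N + y)⁻¹) := by
  have hy0 : 0 < y := by linarith
  have hx : 0 < y / N := by positivity
  have hlow : (1 + y / N) / 2 ≤ 1 + (y / N) ^ α := by
    rcases le_total (y / N) 1 with h | h
    · linarith [Real.rpow_nonneg hx.le α]
    · linarith [Real.self_le_rpow_of_one_le h hα]
  have hratio : y ^ (-(2 * α)) / (y ^ (-α) + N ^ (-α)) ^ 2 = 1 / (1 + (y / N) ^ α) ^ 2 := by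
    have hya := Real.rpow_pos_of_pos hy0 α
    have hNa := Real.rpow_pos_of_pos hN α
    rw [Real.div_rpow hy0.le hN.le, Real.rpow_neg hy0.le, Real.rpow_neg hy0.le,
      Real.rpow_neg hN.le, mul_comm 2 α, Real.rpow_mul hy0.le, Real.rpow_two]
    field_simp
  have hpos : 0 < N + (y - 1) := by linarith
  calc y ^ (-(2 * α)) / (y ^ (-α) + N ^ (-α)) ^ 2
      = 1 / (1 + (y / N) ^ α) ^ 2 := hratio
    _ ≤ 1 / ((1 + y / N) / 2) ^ 2 := by gcongr
    _ = 4 * N ^ 2 * (1 / ((N + y) * (N + y))) := by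
      field_simp
      ring
    _ ≤ 4 * N ^ 2 * (1 / ((N + (y - 1)) * (N + y))) := by
      gcongr
      linarith
    _ = 4 * N ^ 2 * ((N + (y - 1))⁻¹ - (N + y)⁻¹) := by
      field_simp
      ring

/-- The effective dimension of polynomially decaying eigenvalues at ridge level `N ^ (-α)`
is at most `4 * N`. -/
theorem tsum_rpow_div_sq_add_le {α N : ℝ} (hα : 1 ≤ α) (hN : 0 < N) :
    ∑' j : ℕ+, (j : ℝ) ^ (-(2 * α)) / ((j : ℝ) ^ (-α) + N ^ (-α)) ^ 2 ≤ 4 * N := by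
  rw [tsum_pnat_eq_tsum_succ
    (f := fun n : ℕ => (n : ℝ) ^ (-(2 * α)) / ((n : ℝ) ^ (-α) + N ^ (-α)) ^ 2)]
  refine Real.tsum_le_of_sum_range_le (fun n => by positivity) fun n => ?_
  calc ∑ i ∈ Finset.range n, ((i + 1 : ℕ) : ℝ) ^ (-(2 * α)) /
          (((i + 1 : ℕ) : ℝ) ^ (-α) + N ^ (-α)) ^ 2
      ≤ ∑ i ∈ Finset.range n, 4 * N ^ 2 * ((N + (i : ℝ))⁻¹ - (N + ((i + 1 : ℕ) : ℝ))⁻¹) := by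
        refine Finset.sum_le_sum fun i _ => ?_
        have h := rpow_div_sq_add_le_telescope (y := ((i + 1 : ℕ) : ℝ)) hα hN (by simp)
        simpa using h
    _ = 4 * N ^ 2 * (N⁻¹ - (N + (n : ℝ))⁻¹) := by
        rw [← Finset.mul_sum, Finset.sum_range_sub' fun i : ℕ => (N + (i : ℝ))⁻¹]
        simp
    _ ≤ 4 * N ^ 2 * N⁻¹ := by
        gcongr
        exact sub_le_self _ (by positivity)
    _ = 4 * N := by field_simp

/-- **Sequence lemma, part (C).**  For `α > 1`, `β > 1/2`, there is a constant `C > 0`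
(depending only on `α, β`) such that for all `T ≥ 1`, with `ζ_T = T ^ (-α/(α+2β))`,
`∑_{j≥1} j^{-2α} / (j^{-α} + ζ_T)² ≤ C · T^{1/(α+2β)}`. -/
theorem sequence_lemma_C (α β : ℝ) (hα : 1 < α) (hβ : 1 / 2 < β) :
    ∃ C > (0 : ℝ), ∀ T : ℝ, 1 ≤ T →
      (∑' j : ℕ+, (j : ℝ) ^ (-(2 * α)) /
          ((j : ℝ) ^ (-α) + T ^ (-α / (α + 2 * β))) ^ 2)
        ≤ C * T ^ ((1 : ℝ) / (α + 2 * β)) := by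
  refine ⟨4, by norm_num, fun T hT => ?_⟩
  have hT0 : 0 < T := by linarith
  have hζ : T ^ (-α / (α + 2 * β)) = (T ^ ((1 : ℝ) / (α + 2 * β))) ^ (-α) := by
    rw [← Real.rpow_mul hT0.le]
    congr 1
    ring
  rw [hζ]
  exact tsum_rpow_div_sq_add_le hα.le (Real.rpow_pos_of_pos hT0 _)
end

section
/- Let p ≥ 1 be an integer and let W : ℝ → ℝ be bounded, of bounded variation, with W(x) = 0 for |x| ≥ 1, ∫_ℝ W(α) dα = 1, and ∫_ℝ W(α) α^j dα = 0 for every integer 1 ≤ j ≤ p−1. Then there exists C > 0, depending only on W and p, such that for every integer T ≥ 2, every b ∈ (0, π/2), every ω ∈ [0, 2π], and every integer 0 ≤ j ≤ p−1: |(2π/T) ∑_{s=0}^{T−1} W_b(ω − u_s) · (ω − u_s)^j − δ_{0j}| ≤ C/(T·b), where δ_{0j} = 1 if j = 0 and 0 otherwise. -/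
/-- The periodized smoothing kernel `W_b(x) = (1/b) ∑_{k ∈ ℤ} W((x + 2kπ)/b)`. -/
noncomputable def Wper (W : ℝ → ℝ) (b x : ℝ) : ℝ :=
  (1 / b) * ∑' k : ℤ, W ((x + 2 * (k : ℝ) * Real.pi) / b)

open MeasureTheory Set

lemma BoundedVariationOn.mul_pow_of_support {W : ℝ → ℝ} (hW : BoundedVariationOn W univ)
    (hsupp : ∀ x : ℝ, 1 ≤ |x| → W x = 0) (j : ℕ) :
    BoundedVariationOn (fun x => W x * x ^ j) univ := by
  have hclamp : BoundedVariationOn (fun x : ℝ => max (-1) (min x 1)) univ := by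
    refine MonotoneOn.boundedVariationOn (C := 1) ?_ ?_
    · intro x _ y _ hxy
      exact max_le_max le_rfl (min_le_min hxy le_rfl)
    · intro x _
      rw [abs_le]
      exact ⟨le_max_left _ _, max_le (by norm_num) (min_le_right _ _)⟩
  induction j with
  | zero => simpa using hW
  | succ j ih =>
    convert ih.mul hclamp using 1
    funext x
    simp only [Pi.mul_apply]
    rcases le_or_gt 1 |x| with hx | hx
    · simp [hsupp x hx]
    · obtain ⟨h₁, h₂⟩ := abs_lt.1 hx
      rw [min_eq_left h₂.le, max_eq_right h₁.le]
      ring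

lemma BoundedVariationOn.intervalIntegrable {F : ℝ → ℝ} (hF : BoundedVariationOn F univ)
    (a b : ℝ) : IntervalIntegrable F volume a b := by
  obtain ⟨p, q, hp, hq, rfl⟩ := hF.locallyBoundedVariationOn.exists_monotoneOn_sub_monotoneOn
  exact ((hp.mono (subset_univ _)).intervalIntegrable).sub
    ((hq.mono (subset_univ _)).intervalIntegrable)

/-- The left Riemann sum of a function of bounded variation over a uniform grid of mesh `h`
differs from the integral by at most `h` times the total variation. -/
lemma BoundedVariationOn.abs_riemann_sum_sub_integral_le {F : ℝ → ℝ}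
    (hF : BoundedVariationOn F univ) {h : ℝ} (hh : 0 ≤ h) (a : ℝ) (n : ℕ) :
    |h * ∑ i ∈ Finset.range n, F (a + i * h) - ∫ x in a..(a + n * h), F x| ≤
      h * (eVariationOn F univ).toReal := by
  set I : ℕ → ℝ := fun i => a + i * h with hI
  have hmono : Monotone I := by
    intro i k hik
    simp only [hI]
    gcongr
  have hstep (i : ℕ) : I (i + 1) - I i = h := by
    simp only [hI]; push_cast; ring
  have hsum := intervalIntegral.sum_integral_adjacent_intervals (μ := volume) (f := F) (a := I)
    (n := n) fun i _ => hF.intervalIntegrable _ _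
  have hI0 : I 0 = a := by simp [hI]
  rw [hI0] at hsum
  have hBV (i : ℕ) : BoundedVariationOn F (Icc (I i) (I (i + 1))) := hF.mono (subset_univ _)
  have hcell (i : ℕ) : |h * F (I i) - ∫ x in I i..I (i + 1), F x| ≤
      h * (eVariationOn F (Icc (I i) (I (i + 1)))).toReal := by
    have hle : I i ≤ I (i + 1) := hmono i.le_succ
    have heq : h * F (I i) - ∫ x in I i..I (i + 1), F x =
        ∫ x in I i..I (i + 1), (F (I i) - F x) := by
      rw [intervalIntegral.integral_sub (by simp) (hF.intervalIntegrable _ _),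
        intervalIntegral.integral_const, hstep, smul_eq_mul]
    rw [heq, mul_comm h]
    have := intervalIntegral.norm_integral_le_of_norm_le_const (a := I i) (b := I (i + 1))
      (f := fun x => F (I i) - F x) (C := (eVariationOn F (Icc (I i) (I (i + 1)))).toReal) ?_
    · rwa [hstep, abs_of_nonneg hh] at this
    · intro x hx
      rw [uIoc_of_le hle] at hx
      rw [← dist_eq_norm]
      exact (hBV i).dist_le (left_mem_Icc.2 hle) (Ioc_subset_Icc_self hx)
  calc |h * ∑ i ∈ Finset.range n, F (I i) - ∫ x in a..I n, F x|
      = |∑ i ∈ Finset.range n, (h * F (I i) - ∫ x in I i..I (i + 1), F x)| := by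
        rw [Finset.sum_sub_distrib, hsum, Finset.mul_sum]
    _ ≤ ∑ i ∈ Finset.range n, |h * F (I i) - ∫ x in I i..I (i + 1), F x| :=
        Finset.abs_sum_le_sum_abs _ _
    _ ≤ ∑ i ∈ Finset.range n, h * (eVariationOn F (Icc (I i) (I (i + 1)))).toReal :=
        Finset.sum_le_sum fun i _ => hcell i
    _ = h * (eVariationOn F (Icc (I 0) (I n))).toReal := by
        rw [← Finset.mul_sum, ← ENNReal.toReal_sum fun i _ => hBV i, eVariationOn.sum' F hmono]
    _ ≤ h * (eVariationOn F univ).toReal := by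
        gcongr
        exact eVariationOn.mono F (subset_univ _)

/-- Riemann-sum estimate on the grid `h ℤ` for a compactly supported function of bounded
variation, where the sum runs over any finite set of indices carrying all nonzero values. -/
lemma BoundedVariationOn.abs_int_riemann_sum_sub_integral_le {F : ℝ → ℝ}
    (hF : BoundedVariationOn F univ) {h B : ℝ} (hh : 0 < h) (hB : ∀ x, B ≤ |x| → F x = 0)
    (M : Finset ℤ) (hM : ∀ m : ℤ, m ∉ M → F (m * h) = 0) :
    |h * ∑ m ∈ M, F (m * h) - ∫ x, F x| ≤ h * (eVariationOn F univ).toReal := by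
  obtain ⟨N₁, hN₁⟩ := exists_nat_gt (B / h)
  obtain ⟨N, hN, hMN⟩ : ∃ N : ℕ, B < N * h ∧ ∀ m ∈ M, -(N : ℤ) ≤ m ∧ m < N := by
    refine ⟨N₁ + ∑ m ∈ M, (m.natAbs + 1), ?_, fun m hm => ?_⟩
    · rw [div_lt_iff₀ hh] at hN₁
      refine hN₁.trans_le ?_
      gcongr
      exact Nat.le_add_right _ _
    · have := Finset.single_le_sum (f := fun m : ℤ => m.natAbs + 1) (fun _ _ => Nat.zero_le _) hm
      omega
  have hsum : ∑ m ∈ M, F (m * h) =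
      ∑ i ∈ Finset.range (2 * N), F (-(N * h) + i * h) := by
    have himage : ∑ i ∈ Finset.range (2 * N), F (-(N * h) + i * h) =
        ∑ m ∈ (Finset.range (2 * N)).image (fun i : ℕ => (i : ℤ) - N), F (m * h) := by
      rw [Finset.sum_image (by intro i _ k _ hik; simpa using hik)]
      refine Finset.sum_congr rfl fun i _ => ?_
      congr 1
      push_cast
      ring
    rw [himage]
    refine Finset.sum_subset (fun m hm => ?_) fun m _ hm => hM m hm
    obtain ⟨h₁, h₂⟩ := hMN m hm
    exact Finset.mem_image.2 ⟨(m + N).toNat, by rw [Finset.mem_range]; omega, by omega⟩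
  have hint : ∫ x in (-(N * h))..(-(N * h) + (2 * N : ℕ) * h), F x = ∫ x, F x := by
    apply intervalIntegral.integral_eq_integral_of_support_subset
    intro x hx
    have hx' : |x| < B := lt_of_not_ge fun hle => hx (hB x hle)
    obtain ⟨h₁, h₂⟩ := abs_lt.1 (hx'.trans hN)
    refine ⟨h₁, ?_⟩
    push_cast
    linarith
  rw [hsum, ← hint]
  exact hF.abs_riemann_sum_sub_integral_le hh.le _ _

lemma Wper_eq_of_abs_le_pi {W : ℝ → ℝ} (hsupp : ∀ x : ℝ, 1 ≤ |x| → W x = 0) {b x : ℝ}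
    (hb : 0 < b) (hbπ : b < Real.pi) (hx : |x| ≤ Real.pi) : Wper W b x = 1 / b * W (x / b) := by
  rw [Wper, tsum_eq_single (0 : ℤ)]
  · simp
  · intro k hk
    apply hsupp
    rw [abs_div, abs_of_pos hb, one_le_div hb]
    refine hbπ.le.trans ?_
    have hk1 : (1 : ℝ) ≤ |(k : ℝ)| := by exact_mod_cast Int.one_le_abs hk
    have habs : |2 * (k : ℝ) * Real.pi| = 2 * |(k : ℝ)| * Real.pi := by
      rw [abs_mul, abs_mul, abs_two, abs_of_pos Real.pi_pos]
    have htri := abs_sub_abs_le_abs_add (2 * (k : ℝ) * Real.pi) x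
    rw [add_comm] at htri
    nlinarith [Real.pi_pos]

/-- The grid sum of a function supported in `(-π, π)` over one period, with representatives
chosen within distance `π` of `ω`, equals a sum over a finite set of integers which carries all
nonzero values. -/
lemma exists_finset_int_sum_eq {T : ℕ} (hT : 0 < T) {G : ℝ → ℝ} {b ω : ℝ} (hb : b < Real.pi)
    (hG : ∀ x, b ≤ |x| → G x = 0) {u : ℕ → ℝ}
    (hu : ∀ s < T, (∃ k : ℤ, u s = 2 * Real.pi * s / T + 2 * (k : ℝ) * Real.pi) ∧
      |ω - u s| ≤ Real.pi) :
    ∃ M : Finset ℤ, ∑ s ∈ Finset.range T, G (ω - u s) =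
        ∑ m ∈ M, G (ω - m * (2 * Real.pi / T)) ∧
      ∀ m : ℤ, m ∉ M → G (ω - m * (2 * Real.pi / T)) = 0 := by
  have hT' : (T : ℝ) ≠ 0 := by positivity
  choose! k hk using fun s hs => (hu s hs).1
  have hus (s : ℕ) (hs : s < T) :
      u s = ((s + k s * T : ℤ) : ℝ) * (2 * Real.pi / T) := by
    rw [hk s hs]
    push_cast
    field_simp
  refine ⟨(Finset.range T).image fun s : ℕ => (s + k s * T : ℤ), ?_, fun m hm => ?_⟩
  · rw [Finset.sum_image]
    · exact Finset.sum_congr rfl fun s hs => by rw [hus s (Finset.mem_range.1 hs)]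
    · intro s hs t ht hst
      simp only [Finset.coe_range, mem_Iio] at hs ht
      have := congrArg (· % (T : ℤ)) hst
      simp only [Int.add_mul_emod_self_right] at this
      rw [Int.emod_eq_of_lt (by omega) (by omega), Int.emod_eq_of_lt (by omega) (by omega)] at this
      exact_mod_cast this
  · by_contra hne
    have hmb : |ω - m * (2 * Real.pi / T)| < b := lt_of_not_ge fun hle => hne (hG _ hle)
    have hTz : (0 : ℤ) < T := by exact_mod_cast hT
    have h0 := Int.emod_nonneg m hTz.ne'
    have h1 := Int.emod_lt_of_pos m hTz
    obtain ⟨s, hs⟩ := Int.eq_ofNat_of_zero_le h0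
    have hsT : s < T := by omega
    have hms : m = s + (m / T) * T := by
      have := Int.emod_add_mul_ediv m T
      rw [hs, mul_comm] at this
      exact this.symm
    have hdiff : u s - m * (2 * Real.pi / T) = ((k s - m / T : ℤ) : ℝ) * (2 * Real.pi) := by
      rw [hus s hsT]
      nth_rewrite 1 [hms]
      push_cast
      field_simp
      ring
    have hlt : |((k s - m / T : ℤ) : ℝ) * (2 * Real.pi)| < 2 * Real.pi := by
      rw [← hdiff]
      have hle := (hu s hsT).2
      rw [abs_le] at hle
      rw [abs_lt] at hmb ⊢
      constructor <;> linarith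
    have hk0 : k s - m / T = 0 := by
      rw [abs_mul, abs_of_pos Real.two_pi_pos, mul_lt_iff_lt_one_left Real.two_pi_pos] at hlt
      exact Int.abs_lt_one_iff.1 (by exact_mod_cast hlt)
    refine hm (Finset.mem_image.2 ⟨s, Finset.mem_range.2 hsT, ?_⟩)
    rw [sub_eq_zero.1 hk0]
    exact hms.symm

/-- **Riemann-sum kernel lemma, part (A).**
Let `W` be bounded, of bounded variation, supported in `[-1,1]`, with `∫ W = 1` and
vanishing moments of orders `1, …, p-1`.  Then there is `C > 0` (depending only on `W, p`)
such that for all `T ≥ 2`, `b ∈ (0, π/2)`, `ω ∈ [0, 2π]`, `0 ≤ j ≤ p-1`, and any choice of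
grid points `u s ∈ {2πs/T + 2kπ : k ∈ ℤ}` with `|ω - u s| ≤ π`,
`|(2π/T) ∑_{s<T} W_b(ω - u s)(ω - u s)^j - δ_{0j}| ≤ C/(T·b)`. -/
theorem kernel_riemann_sum_A (p : ℕ) (hp : 1 ≤ p) (W : ℝ → ℝ)
    (hWbd : ∃ M, ∀ x, |W x| ≤ M)
    (hBV : BoundedVariationOn W Set.univ)
    (hsupp : ∀ x : ℝ, 1 ≤ |x| → W x = 0)
    (hint : (∫ x, W x) = 1)
    (hmom : ∀ j : ℕ, 1 ≤ j → j ≤ p - 1 → (∫ x, W x * x ^ j) = 0) :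
    ∃ C > (0 : ℝ), ∀ T : ℕ, 2 ≤ T → ∀ b : ℝ, 0 < b → b < Real.pi / 2 →
      ∀ ω ∈ Set.Icc (0 : ℝ) (2 * Real.pi), ∀ j : ℕ, j ≤ p - 1 →
      ∀ u : ℕ → ℝ,
        (∀ s < T, (∃ k : ℤ, u s = 2 * Real.pi * s / T + 2 * (k : ℝ) * Real.pi) ∧
          |ω - u s| ≤ Real.pi) →
        |(2 * Real.pi / T) * ∑ s ∈ Finset.range T, Wper W b (ω - u s) * (ω - u s) ^ j -
            (if j = 0 then 1 else 0)| ≤ C / (T * b) := by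
  set g : ℕ → ℝ → ℝ := fun j x => W x * x ^ j with hg
  have hgBV (j : ℕ) : BoundedVariationOn (g j) univ := hBV.mul_pow_of_support hsupp j
  have hgint (j : ℕ) (hj : j ≤ p - 1) : ∫ x, g j x = if j = 0 then 1 else 0 := by
    split_ifs with h0
    · subst h0; simpa [hg] using hint
    · exact hmom j (Nat.one_le_iff_ne_zero.2 h0) hj
  set V : ℕ → ℝ := fun j => (Real.pi / 2) ^ j * (eVariationOn (g j) univ).toReal with hV
  have hV0 (j : ℕ) : 0 ≤ V j := by positivity
  refine ⟨2 * Real.pi * ∑ j ∈ Finset.range p, V j + 1, ?_, ?_⟩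
  · have := Finset.sum_nonneg fun j (_ : j ∈ Finset.range p) => hV0 j
    positivity
  intro T hT b hb hbπ ω _ j hj u hu
  have hTpos : (0 : ℝ) < T := by positivity
  have hbπ' : b < Real.pi := by linarith [Real.pi_pos]
  set h : ℝ := 2 * Real.pi / T with hh
  have hhpos : 0 < h := by positivity
  set G : ℝ → ℝ := fun x => g j (x / b) with hGdef
  have hG (x : ℝ) (hx : b ≤ |x|) : G x = 0 := by
    have : W (x / b) = 0 := hsupp _ (by rwa [abs_div, abs_of_pos hb, one_le_div hb])
    simp [hGdef, hg, this]
  obtain ⟨M, hMsum, hM⟩ := exists_finset_int_sum_eq (by omega) hbπ' hG hu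
  have hvar : eVariationOn (fun y => G (ω - y)) univ ≤ eVariationOn (g j) univ :=
    eVariationOn.comp_le_of_antitoneOn (g j) (fun y => (ω - y) / b)
      (fun x _ y _ hxy => by dsimp only; gcongr) (mapsTo_univ _ _)
  have hFBV : BoundedVariationOn (fun y => G (ω - y)) univ :=
    ne_top_of_le_ne_top (hgBV j) hvar
  have hFint : ∫ y, G (ω - y) = b * if j = 0 then 1 else 0 := by
    rw [integral_sub_left_eq_self G volume ω, Measure.integral_comp_div (g j) b, hgint j hj,
      abs_of_pos hb, smul_eq_mul]
  have hFsupp (y : ℝ) (hy : b + |ω| ≤ |y|) : G (ω - y) = 0 := by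
    apply hG
    have := abs_sub_abs_le_abs_sub y ω
    rw [abs_sub_comm] at this
    linarith
  have hmain := hFBV.abs_int_riemann_sum_sub_integral_le hhpos hFsupp M hM
  rw [← hMsum, hFint] at hmain
  have hterm : ∑ s ∈ Finset.range T, Wper W b (ω - u s) * (ω - u s) ^ j =
      b ^ j / b * ∑ s ∈ Finset.range T, G (ω - u s) := by
    rw [Finset.mul_sum]
    refine Finset.sum_congr rfl fun s hs => ?_
    rw [Wper_eq_of_abs_le_pi hsupp hb hbπ' (hu s (Finset.mem_range.1 hs)).2]
    simp only [hGdef, hg, div_pow]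
    field_simp
  have hδ : (if j = 0 then 1 else 0 : ℝ) = b ^ j / b * (b * if j = 0 then 1 else 0) := by
    split_ifs with h0
    · subst h0; field_simp
    · simp
  calc |h * ∑ s ∈ Finset.range T, Wper W b (ω - u s) * (ω - u s) ^ j - if j = 0 then 1 else 0|
      = b ^ j / b * |h * ∑ s ∈ Finset.range T, G (ω - u s) - b * if j = 0 then 1 else 0| := by
        rw [hterm, ← abs_of_pos (show 0 < b ^ j / b by positivity), ← abs_mul,
          abs_of_pos (show 0 < b ^ j / b by positivity), mul_sub, ← hδ]
        congr 1
        ring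
    _ ≤ (Real.pi / 2) ^ j / b * (h * (eVariationOn (g j) univ).toReal) := by
        refine mul_le_mul (by gcongr) (hmain.trans ?_) (abs_nonneg _) (by positivity)
        gcongr
        exact hgBV j
    _ = 2 * Real.pi * V j / (T * b) := by
        simp only [hh, hV]
        field_simp
    _ ≤ (2 * Real.pi * ∑ j ∈ Finset.range p, V j + 1) / (T * b) := by
        have := Finset.single_le_sum (fun i _ => hV0 i) (Finset.mem_range.2 (by omega : j < p))
        have : 2 * Real.pi * V j ≤ 2 * Real.pi * ∑ j ∈ Finset.range p, V j := by gcongr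
        gcongr
        linarith
end

section
/- Let p ≥ 1 be an integer and let W : ℝ → ℝ be bounded, of bounded variation, with W(x) = 0 for |x| ≥ 1, ∫_ℝ W(α) dα = 1, and ∫_ℝ W(α) α^j dα = 0 for every integer 1 ≤ j ≤ p−1. Let g : ℝ → ℂ be 2π-periodic and p times continuously differentiable. Then there exists C > 0, depending only on W, p, and the suprema sup_{x} |g^{(j)}(x)| for 0 ≤ j ≤ p, such that for every integer T ≥ 2, every b ∈ (0, π/2), and every ω ∈ [0, 2π]: |(2π/T) ∑_{s=0}^{T−1} W_b(ω − ν_s) · g(ν_s) − g(ω)| ≤ C·(b^p + 1/(T·b)). -/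
open MeasureTheory

/-- The left Riemann sum of `f • g` over a uniform partition differs from the integral by at most
the mesh times a constant, when `f` has bounded variation and `g` is bounded and Lipschitz. -/
theorem norm_riemann_sum_sub_integral_le {E : Type*} [NormedAddCommGroup E] [NormedSpace ℝ E]
    [CompleteSpace E] {f : ℝ → ℝ} {g : ℝ → E} {B M K L : ℝ}
    (hf : BoundedVariationOn f Set.univ) (hfi : ∀ a b, IntervalIntegrable f volume a b)
    (hfB : ∀ x, |f x| ≤ B)
    (hgc : Continuous g) (hgM : ∀ x, ‖g x‖ ≤ M) (hgK : ∀ x y, ‖g x - g y‖ ≤ K * |x - y|)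
    (hK : 0 ≤ K) (hL : 0 ≤ L) {T : ℕ} (hT : T ≠ 0) :
    ‖(L / T) • ∑ s ∈ Finset.range T, f (L * s / T) • g (L * s / T) -
        ∫ x in (0 : ℝ)..L, f x • g x‖ ≤
      L / T * ((eVariationOn f Set.univ).toReal * M + B * K * L) := by
  have hT' : (0 : ℝ) < T := by positivity
  have hB : 0 ≤ B := (abs_nonneg _).trans (hfB 0)
  have hM : 0 ≤ M := (norm_nonneg _).trans (hgM 0)
  set u : ℕ → ℝ := fun s => L * s / T with hu
  have hstep : ∀ s, u (s + 1) - u s = L / T := fun s => by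
    simp only [hu]; push_cast; field_simp; ring
  have hδ : 0 ≤ L / T := by positivity
  have hmono : Monotone u := monotone_nat_of_le_succ fun s => by linarith [hstep s]
  have hfg : ∀ a b, IntervalIntegrable (fun x => f x • g x) volume a b := fun a b =>
    (hfi a b).smul_continuousOn hgc.continuousOn
  have hsum : ∑ s ∈ Finset.range T, ∫ x in u s..u (s + 1), f x • g x =
      ∫ x in (0 : ℝ)..L, f x • g x := by
    rw [intervalIntegral.sum_integral_adjacent_intervals fun s _ => hfg _ _]
    simp [hu, hT'.ne']
  set v : ℕ → ℝ := fun s => (eVariationOn f (Set.Icc (u s) (u (s + 1)))).toReal with hv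
  have hcell : ∀ s, ‖(L / T) • (f (u s) • g (u s)) - ∫ x in u s..u (s + 1), f x • g x‖ ≤
      (v s * M + B * K * (L / T)) * (L / T) := by
    intro s
    have hconst : (L / T) • (f (u s) • g (u s)) = ∫ _ in u s..u (s + 1), f (u s) • g (u s) := by
      rw [intervalIntegral.integral_const, hstep]
    rw [hconst, ← intervalIntegral.integral_sub intervalIntegrable_const (hfg _ _)]
    refine (intervalIntegral.norm_integral_le_of_norm_le_const (C := v s * M + B * K * (L / T))
      fun x hx => ?_).trans_eq ?_
    · rw [Set.uIoc_of_le (hmono s.le_succ)] at hx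
      have hx0 : u s ∈ Set.Icc (u s) (u (s + 1)) := ⟨le_rfl, hmono s.le_succ⟩
      have hvar : |f (u s) - f x| ≤ v s :=
        (hf.mono (Set.subset_univ _)).dist_le hx0 ⟨hx.1.le, hx.2⟩
      have hdx : |u s - x| ≤ L / T := by
        rw [abs_sub_comm, abs_of_pos (by linarith [hx.1])]; linarith [hstep s, hx.2]
      have hsplit : f (u s) • g (u s) - f x • g x =
          (f (u s) - f x) • g x + f (u s) • (g (u s) - g x) := by
        rw [sub_smul, smul_sub]; abel
      rw [hsplit]
      refine (norm_add_le _ _).trans ?_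
      rw [norm_smul, norm_smul, Real.norm_eq_abs, Real.norm_eq_abs, mul_assoc B]
      gcongr
      · exact hgM x
      · exact hfB _
      · exact (hgK _ _).trans (by gcongr)
    · rw [hstep, abs_of_nonneg hδ]
  have hvsum : ∑ s ∈ Finset.range T, v s ≤ (eVariationOn f Set.univ).toReal := by
    have hne : ∀ s ∈ Finset.range T, eVariationOn f (Set.Icc (u s) (u (s + 1))) ≠ ⊤ :=
      fun s _ => hf.mono (Set.subset_univ _)
    rw [hv, ← ENNReal.toReal_sum hne, eVariationOn.sum' f hmono]
    exact ENNReal.toReal_mono hf (eVariationOn.mono f (Set.subset_univ _))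
  rw [← hsum, Finset.smul_sum, ← Finset.sum_sub_distrib]
  refine (norm_sum_le _ _).trans ((Finset.sum_le_sum fun s _ => hcell s).trans ?_)
  rw [← Finset.sum_mul, Finset.sum_add_distrib, ← Finset.sum_mul, Finset.sum_const,
    Finset.card_range, nsmul_eq_mul, mul_comm]
  have hTL : (T : ℝ) * (B * K * (L / T)) = B * K * L := by field_simp
  rw [hTL]
  gcongr

/-- Two-sided Taylor bound along the real line for vector-valued functions. -/
theorem norm_sub_taylor_sum_le {E : Type*} [NormedAddCommGroup E] [NormedSpace ℝ E]
    {g : ℝ → E} {n : ℕ} {M : ℝ} (hg : ContDiff ℝ (n + 1 : ℕ) g)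
    (hM : ∀ x, ‖iteratedDeriv (n + 1) g x‖ ≤ M) (x h : ℝ) :
    ‖g (x + h) - ∑ j ∈ Finset.range (n + 1), ((j.factorial : ℝ)⁻¹ * h ^ j) • iteratedDeriv j g x‖ ≤
      M * |h| ^ (n + 1) := by
  have hM0 : 0 ≤ M := (norm_nonneg _).trans (hM 0)
  set φ : ℝ → E := fun t => g (x + h * t) with hφ
  have hshift : ContDiff ℝ (n + 1 : ℕ) fun z => g (x + z) := by fun_prop
  have hφc : ContDiff ℝ (n + 1 : ℕ) φ := by fun_prop
  have hderiv : ∀ j ≤ n + 1, ∀ t ∈ Set.Icc (0 : ℝ) 1,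
      iteratedDerivWithin j φ (Set.Icc 0 1) t = h ^ j • iteratedDeriv j g (x + h * t) := by
    intro j hj t ht
    have hj' : ((j : ℕ) : WithTop ℕ∞) ≤ ((n + 1 : ℕ) : WithTop ℕ∞) := by exact_mod_cast hj
    rw [iteratedDerivWithin_eq_iteratedDeriv (uniqueDiffOn_Icc one_pos)
      (hφc.of_le hj').contDiffAt ht, hφ,
      iteratedDeriv_comp_const_smul (f := fun z => g (x + z)) (hshift.of_le hj') h,
      iteratedDeriv_comp_const_add]
  have key := taylor_mean_remainder_bound (f := φ) (a := 0) (b := 1) (x := 1) (n := n)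
    (C := M * |h| ^ (n + 1)) zero_le_one (by exact_mod_cast hφc.contDiffOn) (by simp) (by
      intro y hy
      rw [hderiv _ le_rfl y hy, norm_smul, norm_pow, Real.norm_eq_abs, mul_comm]
      gcongr
      exact hM _)
  rw [taylor_within_apply] at key
  have hpoly : ∑ j ∈ Finset.range (n + 1), ((j.factorial : ℝ)⁻¹ * (1 - 0) ^ j) •
        iteratedDerivWithin j φ (Set.Icc 0 1) 0 =
      ∑ j ∈ Finset.range (n + 1), ((j.factorial : ℝ)⁻¹ * h ^ j) • iteratedDeriv j g x := by
    refine Finset.sum_congr rfl fun j hj => ?_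
    rw [hderiv j (Finset.mem_range.1 hj).le 0 (by simp), smul_smul]
    simp
  rw [hpoly] at key
  simp only [hφ, mul_one, sub_zero, one_pow] at key
  refine key.trans (div_le_self (by positivity) ?_)
  exact_mod_cast n.factorial_pos

/-- A kernel supported in `[-1, 1]` multiplied by a monomial is integrable. -/
theorem integrable_mul_pow_of_support {W : ℝ → ℝ} (hW : Integrable W)
    (hsupp : ∀ x : ℝ, 1 ≤ |x| → W x = 0) (j : ℕ) : Integrable fun x => W x * x ^ j := by
  refine hW.mono (hW.aestronglyMeasurable.mul (by fun_prop)) (.of_forall fun x => ?_)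
  rcases le_or_gt 1 |x| with hx | hx
  · simp [hsupp x hx]
  · rw [norm_mul, norm_pow, Real.norm_eq_abs x]
    exact mul_le_of_le_one_right (norm_nonneg _) (pow_le_one₀ (abs_nonneg _) hx.le)

/-- Bias of continuous smoothing by a kernel with vanishing moments of orders `1, …, n`. -/
theorem norm_integral_kernel_smul_sub_le {E : Type*} [NormedAddCommGroup E] [NormedSpace ℝ E]
    [CompleteSpace E] {W : ℝ → ℝ} {g : ℝ → E} {n : ℕ} {M M₀ : ℝ} (hW : Integrable W)
    (hsupp : ∀ x : ℝ, 1 ≤ |x| → W x = 0) (hint : (∫ x, W x) = 1)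
    (hmom : ∀ j : ℕ, 1 ≤ j → j ≤ n → (∫ x, W x * x ^ j) = 0)
    (hg : ContDiff ℝ (n + 1 : ℕ) g) (hg0 : ∀ x, ‖g x‖ ≤ M₀)
    (hM : ∀ x, ‖iteratedDeriv (n + 1) g x‖ ≤ M)
    (x : ℝ) {b : ℝ} (hb : 0 ≤ b) :
    ‖(∫ u, W u • g (x - b * u)) - g x‖ ≤ (∫ u, |W u|) * M * b ^ (n + 1) := by
  have hM0 : 0 ≤ M := (norm_nonneg _).trans (hM 0)
  have hgc := hg.continuous
  have hWg : Integrable fun u => W u • g (x - b * u) :=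
    hW.smul_bdd M₀ (by fun_prop) (.of_forall fun u => hg0 _)
  set P : ℝ → E := fun u =>
    ∑ j ∈ Finset.range (n + 1), ((j.factorial : ℝ)⁻¹ * (-(b * u)) ^ j) • iteratedDeriv j g x with hP
  have hterm : ∀ j u, W u • ((j.factorial : ℝ)⁻¹ * (-(b * u)) ^ j) • iteratedDeriv j g x =
      (W u * u ^ j) • ((j.factorial : ℝ)⁻¹ * (-b) ^ j) • iteratedDeriv j g x := by
    intro j u
    rw [smul_smul, smul_smul, neg_mul_eq_neg_mul, mul_pow]
    congr 1
    ring
  have hWP : (fun u => W u • P u) = fun u => ∑ j ∈ Finset.range (n + 1),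
      (W u * u ^ j) • ((j.factorial : ℝ)⁻¹ * (-b) ^ j) • iteratedDeriv j g x := by
    funext u
    simp only [hP, Finset.smul_sum, hterm]
  have hWj := integrable_mul_pow_of_support hW hsupp
  have hWPi : Integrable fun u => W u • P u := by
    rw [hWP]
    exact integrable_finsetSum _ fun j _ => (hWj j).smul_const _
  have hPint : ∫ u, W u • P u = g x := by
    rw [hWP, integral_finsetSum _ fun j _ => (hWj j).smul_const _,
      Finset.sum_eq_single 0]
    · rw [integral_smul_const]
      simp [hint]
    · intro j hj hj0
      rw [integral_smul_const, hmom j (Nat.one_le_iff_ne_zero.2 hj0)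
        (Nat.lt_succ_iff.1 (Finset.mem_range.1 hj)), zero_smul]
    · simp
  rw [← hPint, ← integral_sub hWg hWPi, mul_assoc, ← integral_mul_const]
  refine norm_integral_le_of_norm_le (hW.abs.mul_const _) (.of_forall fun u => ?_)
  rw [← smul_sub, norm_smul, Real.norm_eq_abs]
  rcases le_or_gt 1 |u| with hu | hu
  · simp [hsupp u hu]
  · refine mul_le_mul_of_nonneg_left ?_ (abs_nonneg _)
    refine (norm_sub_taylor_sum_le hg hM x (-(b * u))).trans ?_
    rw [abs_neg, abs_mul, abs_of_nonneg hb]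
    gcongr
    exact mul_le_of_le_one_right hb hu.le

/-- For arguments in `[-2π, 2π]`, only the shifts by `-2π`, `0` and `2π` contribute to the
periodized kernel. -/
theorem Wper_eq_sum {W : ℝ → ℝ} (hsupp : ∀ x : ℝ, 1 ≤ |x| → W x = 0) {b x : ℝ} (hb : 0 < b)
    (hbpi : b < Real.pi) (hx : |x| ≤ 2 * Real.pi) :
    Wper W b x =
      (1 / b) * ∑ k ∈ ({-1, 0, 1} : Finset ℤ), W ((x + 2 * (k : ℝ) * Real.pi) / b) := by
  have hpi := Real.pi_pos
  rw [Wper, tsum_eq_sum]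
  intro k hk
  apply hsupp
  rw [abs_div, abs_of_pos hb, le_div_iff₀ hb, one_mul]
  obtain ⟨hx1, hx2⟩ := abs_le.1 hx
  simp only [Finset.mem_insert, Finset.mem_singleton, not_or] at hk
  rcases (by omega : k ≤ -2 ∨ 2 ≤ k) with h | h
  · have h' : (k : ℝ) ≤ -2 := by exact_mod_cast h
    rw [le_abs]; right; nlinarith
  · have h' : (2 : ℝ) ≤ k := by exact_mod_cast h
    rw [le_abs]; left; nlinarith

/-- Integrating the three relevant shifts of the rescaled kernel against a `2π`-periodic function
over one period gives the full-line convolution. -/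
theorem sum_integral_shift_kernel_smul {E : Type*} [NormedAddCommGroup E] [NormedSpace ℝ E]
    {W : ℝ → ℝ} {g : ℝ → E} (hW : Integrable W)
    (hsupp : ∀ x : ℝ, 1 ≤ |x| → W x = 0) (hg : Continuous g)
    (hper : Function.Periodic g (2 * Real.pi)) {b ω : ℝ} (hb : 0 < b) (hbpi : b < Real.pi)
    (hω : ω ∈ Set.Icc (0 : ℝ) (2 * Real.pi)) :
    ∑ k ∈ ({-1, 0, 1} : Finset ℤ), ∫ x in (0 : ℝ)..2 * Real.pi,
        W ((ω - x + 2 * (k : ℝ) * Real.pi) / b) • g x =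
      b • ∫ u, W u • g (ω - b * u) := by
  have hpi := Real.pi_pos
  set F : ℝ → E := fun x => W ((ω - x) / b) • g x with hF
  have hshift : ∀ k : ℤ, ∫ x in (0 : ℝ)..2 * Real.pi,
      W ((ω - x + 2 * (k : ℝ) * Real.pi) / b) • g x =
      ∫ x in 0 - k * (2 * Real.pi)..2 * Real.pi - k * (2 * Real.pi), F x := by
    intro k
    rw [← intervalIntegral.integral_comp_sub_right]
    refine intervalIntegral.integral_congr fun x _ => ?_
    simp only [hF, hper.sub_int_mul_eq k]
    congr 3
    ring
  have hWi : Integrable fun x => W ((ω - x) / b) := (hW.comp_div hb.ne').comp_sub_left ω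
  have hFi : ∀ c d, IntervalIntegrable F volume c d := fun c d =>
    hWi.intervalIntegrable.smul_continuousOn hg.continuousOn
  have hFsupp : Function.support F ⊆ Set.Ioc (-(2 * Real.pi)) (4 * Real.pi) := by
    intro x hx
    have h1 : |(ω - x) / b| < 1 := by
      by_contra! h
      exact hx (by simp [hF, hsupp _ h])
    rw [abs_div, abs_of_pos hb, div_lt_one hb, abs_lt] at h1
    constructor <;> linarith [h1.1, h1.2, hω.1, hω.2]
  have hwhole : ∫ x, F x = b • ∫ u, W u • g (ω - b * u) := by
    rw [← integral_sub_left_eq_self F volume ω, ← abs_of_pos hb,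
      ← Measure.integral_comp_div, abs_of_pos hb]
    refine integral_congr_ae (.of_forall fun x => ?_)
    simp only [hF, sub_sub_cancel, mul_div_cancel₀ x hb.ne']
  rw [← hwhole, ← intervalIntegral.integral_eq_integral_of_support_subset hFsupp]
  simp only [hshift]
  rw [Finset.sum_insert (by decide), Finset.sum_insert (by decide), Finset.sum_singleton,
    ← intervalIntegral.integral_add_adjacent_intervals (hFi (-(2 * Real.pi)) 0)
      (hFi 0 (4 * Real.pi)),
    ← intervalIntegral.integral_add_adjacent_intervals (hFi 0 (2 * Real.pi))
      (hFi _ (4 * Real.pi))]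
  have e1 : 2 * Real.pi - ((-1 : ℤ) : ℝ) * (2 * Real.pi) = 4 * Real.pi := by push_cast; ring
  have e2 : 0 - ((-1 : ℤ) : ℝ) * (2 * Real.pi) = 2 * Real.pi := by push_cast; ring
  have e3 : 0 - ((1 : ℤ) : ℝ) * (2 * Real.pi) = -(2 * Real.pi) := by push_cast; ring
  have e4 : 2 * Real.pi - ((1 : ℤ) : ℝ) * (2 * Real.pi) = 0 := by push_cast; ring
  rw [e1, e2, e3, e4]
  simp only [Int.cast_zero, zero_mul, sub_zero]
  abel

/-- **Deterministic bias bound for the discretized kernel smoother.**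
Let `W` be bounded, of bounded variation, supported in `[-1,1]`, with `∫ W = 1` and
vanishing moments of orders `1, …, p-1`.  Then for every `M ≥ 0` there is `C > 0`
(depending only on `W`, `p`, and `M`) such that for every `2π`-periodic, `p`-times
continuously differentiable `g : ℝ → ℂ` whose derivatives of order `≤ p` are bounded by
`M`, every `T ≥ 2`, `b ∈ (0, π/2)`, and `ω ∈ [0, 2π]`,
`|(2π/T) ∑_{s<T} W_b(ω - ν s) g(ν s) - g(ω)| ≤ C (b^p + 1/(T·b))`, where `ν s = 2πs/T`. -/
theorem kernel_smoother_bias (p : ℕ) (hp : 1 ≤ p) (W : ℝ → ℝ)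
    (hWbd : ∃ M, ∀ x, |W x| ≤ M)
    (hBV : BoundedVariationOn W Set.univ)
    (hsupp : ∀ x : ℝ, 1 ≤ |x| → W x = 0)
    (hint : (∫ x, W x) = 1)
    (hmom : ∀ j : ℕ, 1 ≤ j → j ≤ p - 1 → (∫ x, W x * x ^ j) = 0) :
    ∀ M : ℝ, 0 ≤ M → ∃ C > (0 : ℝ),
      ∀ g : ℝ → ℂ, Function.Periodic g (2 * Real.pi) → ContDiff ℝ (p : ℕ∞) g →
        (∀ j : ℕ, j ≤ p → ∀ x : ℝ, ‖iteratedDeriv j g x‖ ≤ M) →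
      ∀ T : ℕ, 2 ≤ T → ∀ b : ℝ, 0 < b → b < Real.pi / 2 →
      ∀ ω ∈ Set.Icc (0 : ℝ) (2 * Real.pi),
        ‖(2 * Real.pi / T : ℂ) *
            ∑ s ∈ Finset.range T,
              (Wper W b (ω - 2 * Real.pi * s / T) : ℂ) * g (2 * Real.pi * s / T) -
          g ω‖ ≤ C * (b ^ p + 1 / (T * b)) := by
  intro M hM
  obtain ⟨B, hB⟩ := hWbd
  have hpi := Real.pi_pos
  have hB0 : 0 ≤ B := (abs_nonneg _).trans (hB 0)
  have hWi : Integrable W := not_imp_comm.1 integral_undef (by rw [hint]; exact one_ne_zero)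
  obtain ⟨n, rfl⟩ : ∃ n, p = n + 1 := ⟨p - 1, by omega⟩
  set V := (eVariationOn W Set.univ).toReal
  set D := 2 * Real.pi * (V * M + B * M * (2 * Real.pi)) with hD
  have hV0 : 0 ≤ V := ENNReal.toReal_nonneg
  have hD0 : 0 ≤ D := by positivity
  have hA0 : 0 ≤ ∫ u, |W u| := integral_nonneg fun u => abs_nonneg _
  refine ⟨3 * D + (∫ u, |W u|) * M + 1, by positivity, ?_⟩
  intro g hper hg hgM T hT b hb hb2 ω hω
  have hT0 : T ≠ 0 := by omega
  have hT' : (0 : ℝ) < T := by positivity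
  have hbpi : b < Real.pi := by linarith
  have hg' : ContDiff ℝ (n + 1 : ℕ) g := by exact_mod_cast hg
  have hg0 : ∀ x, ‖g x‖ ≤ M := fun x => by simpa using hgM 0 (by omega) x
  have hgK : ∀ x y, ‖g x - g y‖ ≤ M * |x - y| := fun x y =>
    Convex.norm_image_sub_le_of_norm_deriv_le (s := Set.univ)
      (fun z _ => (hg'.differentiable (by simp)).differentiableAt)
      (fun z _ => by simpa using hgM 1 (by omega) z) convex_univ (Set.mem_univ _) (Set.mem_univ _)
  set f : ℤ → ℝ → ℝ := fun k x => W ((ω - x + 2 * (k : ℝ) * Real.pi) / b) with hf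
  have hfV : ∀ k, eVariationOn (f k) Set.univ ≤ eVariationOn W Set.univ := fun k =>
    eVariationOn.comp_le_of_antitoneOn W (fun x => (ω - x + 2 * (k : ℝ) * Real.pi) / b)
      (fun x _ y _ hxy => by dsimp only; gcongr) (Set.mapsTo_univ _ _)
  have hfi : ∀ k, Integrable (f k) := fun k => by
    have h := (hWi.comp_div hb.ne').comp_sub_left (ω + 2 * (k : ℝ) * Real.pi)
    refine h.congr (.of_forall fun x => ?_)
    simp only [hf]
    congr 2
    ring
  have hriem : ∀ k, ‖(2 * Real.pi / T) • ∑ s ∈ Finset.range T,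
      f k (2 * Real.pi * s / T) • g (2 * Real.pi * s / T) -
        ∫ x in (0 : ℝ)..2 * Real.pi, f k x • g x‖ ≤ D / T := fun k => by
    have hVk : (eVariationOn (f k) Set.univ).toReal ≤ V := ENNReal.toReal_mono hBV (hfV k)
    refine (norm_riemann_sum_sub_integral_le (ne_top_of_le_ne_top hBV (hfV k))
      (fun _ _ => (hfi k).intervalIntegrable) (fun x => hB _) hg'.continuous hg0 hgK hM
      (by positivity) hT0).trans ?_
    rw [hD, div_mul_eq_mul_div]
    gcongr
  have hsum : (2 * Real.pi / T : ℂ) * ∑ s ∈ Finset.range T,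
        (Wper W b (ω - 2 * Real.pi * s / T) : ℂ) * g (2 * Real.pi * s / T) =
      (1 / b) • ∑ k ∈ ({-1, 0, 1} : Finset ℤ), (2 * Real.pi / T) • ∑ s ∈ Finset.range T,
        f k (2 * Real.pi * s / T) • g (2 * Real.pi * s / T) := by
    have hcast : (2 * Real.pi / T : ℂ) = ((2 * Real.pi / T : ℝ) : ℂ) := by push_cast; rfl
    rw [hcast, ← Complex.real_smul, ← Finset.smul_sum, Finset.sum_comm, smul_comm (1 / b)]
    congr 1
    rw [Finset.smul_sum]
    refine Finset.sum_congr rfl fun s hs => ?_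
    have hs1 : 2 * Real.pi * s / T ≤ 2 * Real.pi := by
      rw [div_le_iff₀ hT']
      gcongr
      exact (Finset.mem_range.1 hs).le
    have hs0 : 0 ≤ 2 * Real.pi * s / T := by positivity
    rw [Wper_eq_sum hsupp hb hbpi (abs_le.2 ⟨by linarith [hω.1], by linarith [hω.2]⟩),
      ← Complex.real_smul, ← Finset.sum_smul, smul_smul]
  have hconv := sum_integral_shift_kernel_smul hWi hsupp hg'.continuous hper hb hbpi hω
  have hbias := norm_integral_kernel_smul_sub_le (n := n) hWi hsupp hint hmom hg' hg0
    (hgM (n + 1) le_rfl) ω hb.le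
  set I := ∫ u, W u • g (ω - b * u)
  have hdisc : ‖(1 / b) • ∑ k ∈ ({-1, 0, 1} : Finset ℤ), (2 * Real.pi / T) •
      ∑ s ∈ Finset.range T, f k (2 * Real.pi * s / T) • g (2 * Real.pi * s / T) - I‖ ≤
      3 * D * (1 / (T * b)) := by
    have hI' : I = (1 / b) • ∑ k ∈ ({-1, 0, 1} : Finset ℤ),
        ∫ x in (0 : ℝ)..2 * Real.pi, f k x • g x := by
      rw [hconv, smul_smul, one_div_mul_cancel hb.ne', one_smul]
    rw [hI', ← smul_sub, ← Finset.sum_sub_distrib, norm_smul, Real.norm_of_nonneg (by positivity)]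
    have h3 := norm_sum_le_of_le ({-1, 0, 1} : Finset ℤ) fun k _ => hriem k
    rw [Finset.sum_const, show ({-1, 0, 1} : Finset ℤ).card = 3 from rfl] at h3
    refine (mul_le_mul_of_nonneg_left h3 (by positivity)).trans_eq ?_
    rw [nsmul_eq_mul]
    push_cast
    field_simp
  rw [hsum]
  refine (norm_sub_le_norm_sub_add_norm_sub _ I _).trans ((add_le_add hdisc hbias).trans ?_)
  have hx : 0 ≤ 1 / ((T : ℝ) * b) := by positivity
  have hy : 0 ≤ b ^ (n + 1) := by positivity
  have hAM : 0 ≤ (∫ u, |W u|) * M := by positivity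
  nlinarith [mul_nonneg hD0 hy, mul_nonneg hAM hx]
end
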